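/- Let S be a finite nonempty type, P : S → S → ℝ a row-stochastic matrix (P s s' ≥ 0 and ∑_{s'} P s s' = 1 for all s), R : S → ℝ, γ ∈ [0,1), and ρ, ρ' ∈ ℝ. If X : S → ℝ satisfies X s = R s + γ · ∑_{s'} P s s' · X s' − ρ for all s, and X' : S → ℝ satisfies X' s = R s + γ · ∑_{s'} P s s' · X' s' − ρ' for all s, then X' s = X s + (ρ − ρ')/(1−γ) for every s ∈ S. -/

import Mathlib

/-- Two solutions of the average reward adjusted Bellman evaluation equation
with average-reward constants ρ and ρ' differ by the constant (ρ − ρ')/(1−γ). -/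
theorem stmt_7 {S : Type*} [Fintype S] [Nonempty S] (P : S → S → ℝ)
    (hP0 : ∀ s s' : S, 0 ≤ P s s') (hP1 : ∀ s : S, ∑ s' : S, P s s' = 1)
    (R : S → ℝ) (γ : ℝ) (hγ : γ ∈ Set.Ico (0 : ℝ) 1) (ρ ρ' : ℝ)
    (X X' : S → ℝ)
    (hXeq : ∀ s : S, X s = R s + γ * ∑ s' : S, P s s' * X s' - ρ)
    (hX'eq : ∀ s : S, X' s = R s + γ * ∑ s' : S, P s s' * X' s' - ρ') :
    ∀ s : S, X' s = X s + (ρ - ρ') / (1 - γ) := by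
  obtain ⟨h0, h1⟩ := hγ
  have hpos : 0 < 1 - γ := by linarith
  have hD : ∀ s, X' s - X s = γ * ∑ s' : S, P s s' * (X' s' - X s') + (ρ - ρ') := by
    intro s
    have h : ∑ s' : S, P s s' * (X' s' - X s')
        = ∑ s' : S, P s s' * X' s' - ∑ s' : S, P s s' * X s' := by
      rw [← Finset.sum_sub_distrib]
      exact Finset.sum_congr rfl fun i _ => by ring
    rw [h, mul_sub]
    linarith [hXeq s, hX'eq s]
  obtain ⟨a, ha⟩ := Finite.exists_max (fun s => X' s - X s)
  obtain ⟨b, hb⟩ := Finite.exists_min (fun s => X' s - X s)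
  have hA : ∑ s' : S, P a s' * (X' s' - X s') ≤ X' a - X a := by
    calc _ ≤ ∑ s' : S, P a s' * (X' a - X a) :=
          Finset.sum_le_sum fun i _ => mul_le_mul_of_nonneg_left (ha i) (hP0 a i)
      _ = _ := by rw [← Finset.sum_mul, hP1, one_mul]
  have hB : X' b - X b ≤ ∑ s' : S, P b s' * (X' s' - X s') := by
    calc _ = ∑ s' : S, P b s' * (X' b - X b) := by rw [← Finset.sum_mul, hP1, one_mul]
      _ ≤ _ := Finset.sum_le_sum fun i _ => mul_le_mul_of_nonneg_left (hb i) (hP0 b i)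
  have hA' : X' a - X a ≤ (ρ - ρ') / (1 - γ) := by
    rw [le_div_iff₀ hpos]
    linarith [hD a, mul_le_mul_of_nonneg_left hA h0]
  have hB' : (ρ - ρ') / (1 - γ) ≤ X' b - X b := by
    rw [div_le_iff₀ hpos]
    linarith [hD b, mul_le_mul_of_nonneg_left hB h0]
  intro s
  have h2 := ha s
  have h3 := hb s
  linarith
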